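/- (Upper bound of the logarithm law) Let {u_t} be a one-parameter unipotent subgroup of SL(n,ℝ), n ≥ 2. For Haar-almost every Λ ∈ X_n, limsup_{t→∞} log α₁(u_t Λ)/log t ≤ 1/n. -/

import Mathlib

open MeasureTheory Filter Matrix Real ENNReal

noncomputable section

/-- `SL(n, ℝ)`. -/
abbrev SLR (n : ℕ) := Matrix.SpecialLinearGroup (Fin n) ℝ

instance (n : ℕ) : TopologicalSpace (SLR n) :=
  TopologicalSpace.induced (fun g => (g : Matrix (Fin n) (Fin n) ℝ)) inferInstance

/-- The image of `SL(n, ℤ)` in `SL(n, ℝ)`. -/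
def latticeGamma (n : ℕ) : Subgroup (SLR n) :=
  (Matrix.SpecialLinearGroup.map (n := Fin n) (Int.castRingHom ℝ)).range

/-- The space of unimodular lattices `X_n = SL(n,ℝ)/SL(n,ℤ)`. -/
abbrev LatticeSpace (n : ℕ) := SLR n ⧸ latticeGamma n

instance (n : ℕ) : MeasurableSpace (LatticeSpace n) := borel _

/-- The real vector `g · m` of the lattice `g ℤⁿ` coming from the integer vector `m`. -/
def vecOf (n : ℕ) (g : SLR n) (m : Fin n → ℤ) : Fin n → ℝ :=
  (g : Matrix (Fin n) (Fin n) ℝ).mulVec (fun i => (m i : ℝ))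

/-- Euclidean norm on `Fin n → ℝ`. -/
def eNorm {n : ℕ} (v : Fin n → ℝ) : ℝ := ‖(WithLp.equiv 2 (Fin n → ℝ)).symm v‖

/-- The lattice `Λ` contains a nonzero vector lying in `A`. -/
def Intersects (n : ℕ) (Λ : LatticeSpace n) (A : Set (Fin n → ℝ)) : Prop :=
  ∀ g : SLR n, (QuotientGroup.mk g : LatticeSpace n) = Λ →
    ∃ m : Fin n → ℤ, m ≠ 0 ∧ vecOf n g m ∈ A

/-- `α₁(Λ) = sup_{0 ≠ v ∈ Λ} 1/‖v‖` (Euclidean norm). -/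
def alpha1 (n : ℕ) (Λ : LatticeSpace n) : ℝ :=
  sSup {r : ℝ | ∃ g : SLR n, (QuotientGroup.mk g : LatticeSpace n) = Λ ∧
    ∃ m : Fin n → ℤ, m ≠ 0 ∧ r = 1 / eNorm (vecOf n g m)}

/-- Every nontrivial discrete subgroup has a shortest nonzero vector for the sup norm; its norm is
attained at some coordinate. -/
theorem exists_shortest {n : ℕ} (L : AddSubgroup (Fin n → ℝ))
    (hfin : ∀ R : ℝ, {v | v ∈ L ∧ ∀ i, |v i| ≤ R}.Finite) (hne : ∃ v ∈ L, v ≠ 0) :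
    ∃ b ∈ L, ∃ p, b p ≠ 0 ∧ (∀ i, |b i| ≤ |b p|) ∧
      ∀ v ∈ L, v ≠ 0 → ∃ i, |b p| ≤ |v i| := by
  obtain ⟨v₀, hv₀, hv₀'⟩ := hne
  have hf : {v | v ∈ L ∧ v ≠ 0 ∧ ‖v‖ ≤ ‖v₀‖}.Finite := by
    refine (hfin ‖v₀‖).subset ?_
    rintro v ⟨hv, -, h⟩
    exact ⟨hv, fun i => (norm_le_pi_norm v i).trans h⟩
  obtain ⟨b, ⟨hbL, hb0, hble⟩, hmin⟩ := hf.exists_minimalFor (fun v => ‖v‖) _ ⟨v₀, hv₀, hv₀', le_rfl⟩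
  have hshort : ∀ v ∈ L, v ≠ 0 → ‖b‖ ≤ ‖v‖ := by
    intro v hv hv0
    by_cases h : ‖v‖ ≤ ‖v₀‖
    · rcases le_total ‖b‖ ‖v‖ with h' | h'
      · exact h'
      · exact hmin ⟨hv, hv0, h⟩ h'
    · exact hble.trans (not_le.mp h).le
  have attained : ∀ v : Fin n → ℝ, v ≠ 0 → ∃ p, ‖v‖ = |v p| := by
    intro v hv
    obtain ⟨j, hj⟩ := Function.ne_iff.mp hv
    have : Nonempty (Fin n) := ⟨j⟩
    obtain ⟨p, hp⟩ := Finite.exists_max (fun i => |v i|)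
    refine ⟨p, le_antisymm ?_ (norm_le_pi_norm v p)⟩
    exact (pi_norm_le_iff_of_nonneg (abs_nonneg _)).2 hp
  obtain ⟨p, hp⟩ := attained b hb0
  refine ⟨b, hbL, p, ?_, ?_, ?_⟩
  · have := norm_pos_iff.mpr hb0
    rw [hp] at this
    exact abs_pos.mp this
  · intro i
    rw [← hp]
    exact norm_le_pi_norm b i
  · intro v hv hv0
    obtain ⟨i, hi⟩ := attained v hv0
    exact ⟨i, by rw [← hp, ← hi]; exact hshort v hv hv0⟩

/-- Projection along `b` onto the coordinates different from `p`. -/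
def projAlong {m : ℕ} (b : Fin (m + 1) → ℝ) (p : Fin (m + 1)) :
    (Fin (m + 1) → ℝ) →ₗ[ℝ] (Fin m → ℝ) where
  toFun v i := v (p.succAbove i) - b (p.succAbove i) / b p * v p
  map_add' v w := by ext i; simp; ring
  map_smul' a v := by ext i; simp; ring

theorem projAlong_apply {m : ℕ} (b : Fin (m + 1) → ℝ) (p : Fin (m + 1)) (v : Fin (m + 1) → ℝ)
    (i : Fin m) :
    projAlong b p v i = v (p.succAbove i) - b (p.succAbove i) / b p * v p := rfl

theorem projAlong_surjective {m : ℕ} (b : Fin (m + 1) → ℝ) (p : Fin (m + 1)) :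
    Function.Surjective (projAlong b p) := by
  intro w
  refine ⟨p.insertNth 0 w, ?_⟩
  ext i
  simp [projAlong_apply]

theorem abs_det_cons_eq {m : ℕ} (b : Fin (m + 1) → ℝ) (p : Fin (m + 1)) (hb : b p ≠ 0)
    (v : Fin m → Fin (m + 1) → ℝ) :
    |(Matrix.of (Fin.cons b v : Fin (m + 1) → Fin (m + 1) → ℝ)).det| =
      |b p| * |(Matrix.of fun i => projAlong b p (v i)).det| := by
  set B : Matrix (Fin (m + 1)) (Fin (m + 1)) ℝ :=
    Matrix.of (Fin.cons b v : Fin (m + 1) → Fin (m + 1) → ℝ) with hB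
  set c : Fin (m + 1) → ℝ := fun j => if j = p then 0 else - (b j / b p) with hc
  set A : Matrix (Fin (m + 1)) (Fin (m + 1)) ℝ := Matrix.of fun i j => B i j + c j * B i p with hA
  have hdet : A.det = B.det := by
    rw [← Matrix.det_transpose A, ← Matrix.det_transpose B]
    exact Matrix.det_eq_of_forall_row_eq_smul_add_const c p (by simp [hc]) fun i j => rfl
  rw [← hdet, Matrix.det_succ_row_zero, Finset.sum_eq_single p]
  · have h0 : A 0 p = b p := by simp [hA, hB, hc]
    have hs : A.submatrix Fin.succ p.succAbove = Matrix.of fun i => projAlong b p (v i) := by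
      ext i j
      simp [hA, hB, hc, projAlong_apply]
      ring
    rw [h0, hs, abs_mul, abs_mul, abs_pow]
    simp
  · intro j _ hj
    have : A 0 j = 0 := by
      simp [hA, hB, hc, hj]
      field_simp
      ring
    rw [this]; ring
  · simp

/-- A lattice contains a lift, with small `p`-th coordinate, of every vector of its projection. -/
theorem exists_lift {m : ℕ} (L : AddSubgroup (Fin (m + 1) → ℝ)) (b : Fin (m + 1) → ℝ)
    (hbL : b ∈ L) (p : Fin (m + 1)) (hb : b p ≠ 0) (w : Fin m → ℝ)
    (hw : w ∈ L.map (projAlong b p).toAddMonoidHom) :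
    ∃ v ∈ L, projAlong b p v = w ∧ |v p| ≤ |b p| / 2 := by
  obtain ⟨v, hv, rfl⟩ := hw
  refine ⟨v - round (v p / b p) • b, L.sub_mem hv (L.zsmul_mem hbL _), ?_, ?_⟩
  · ext i
    simp [projAlong_apply]
    field_simp
    ring
  · have h := abs_sub_round (v p / b p)
    have : (v - round (v p / b p) • b) p = (v p / b p - round (v p / b p)) * b p := by
      simp
      field_simp
    rw [this, abs_mul]
    nlinarith [abs_nonneg (b p)]

theorem exists_empty_box (n : ℕ) : ∃ c : ℝ, 0 < c ∧ c ≤ 1 ∧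
    ∀ (L : AddSubgroup (Fin n → ℝ)) (V : ℝ),
      (∀ R : ℝ, {v | v ∈ L ∧ ∀ i, |v i| ≤ R}.Finite) →
      Submodule.span ℝ (L : Set (Fin n → ℝ)) = ⊤ →
      (∀ w : Fin n → Fin n → ℝ, (∀ i, w i ∈ L) → (Matrix.of w).det ≠ 0 →
        V ≤ |(Matrix.of w).det|) →
      ∃ d : Fin n → ℝ, (∀ i, 0 < d i) ∧ V ≤ ∏ i, d i ∧
        (∀ v ∈ L, (∀ i, |v i| < c * d i) → v = 0) ∧
        (0 < n → ∃ p, ∃ b ∈ L, b ≠ 0 ∧ |b p| = d p ∧ (∀ i, |b i| ≤ d p) ∧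
          (∀ v ∈ L, v ≠ 0 → ∃ i, d p ≤ |v i|) ∧ ∀ i, c * d p ≤ d i) := by
  induction n with
  | zero =>
    refine ⟨1, one_pos, le_rfl, fun L V _ _ hV => ⟨fun _ => 1, by simp, ?_, ?_, by simp⟩⟩
    · simpa using hV (fun i => i.elim0) (fun i => i.elim0) (by simp)
    · intro v _ _
      exact Subsingleton.elim _ _
  | succ m ih =>
    obtain ⟨c', hc'0, hc'1, ih⟩ := ih
    refine ⟨c' * (c' / 2) / 2, by positivity, by nlinarith, ?_⟩
    intro L V hfin hspan hV
    have hne : ∃ v ∈ L, v ≠ 0 := by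
      by_contra! h
      have : (L : Set (Fin (m + 1) → ℝ)) ⊆ {0} := fun v hv => h v hv
      have h2 := Submodule.span_mono (R := ℝ) this
      rw [hspan, Submodule.span_zero_singleton] at h2
      exact top_ne_bot (le_bot_iff.mp h2)
    obtain ⟨b, hbL, p, hbp, hbmax, hmin⟩ := exists_shortest L hfin hne
    have hbpos : 0 < |b p| := abs_pos.mpr hbp
    have hratio : ∀ i, |b i / b p| ≤ 1 := fun i => by
      rw [abs_div, div_le_one hbpos]; exact hbmax i
    have hclose : ∀ (v : Fin (m + 1) → ℝ) (i : Fin m),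
        |projAlong b p v i - v (p.succAbove i)| ≤ |v p| := by
      intro v i
      rw [projAlong_apply, sub_sub_cancel_left, abs_neg, abs_mul]
      nlinarith [hratio (p.succAbove i), abs_nonneg (v p)]
    set L' := L.map (projAlong b p).toAddMonoidHom with hL'
    obtain ⟨d', hd'pos, hd'V, hd'box, hd'p⟩ := ih L' (V / |b p|) (by
      intro R
      refine ((hfin (|R| + |b p|)).image (projAlong b p)).subset ?_
      rintro w ⟨hw, hwR⟩
      obtain ⟨v, hv, rfl, hvp⟩ := exists_lift L b hbL p hbp w hw
      refine ⟨v, ⟨hv, fun i => ?_⟩, rfl⟩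
      rcases Fin.eq_self_or_eq_succAbove p i with rfl | ⟨j, rfl⟩
      · linarith [abs_nonneg R]
      · have h1 := abs_le.mp (hclose v j)
        have h2 := abs_le.mp (hwR j)
        have h3 := le_abs_self R
        rw [abs_le]
        constructor <;> linarith) (by
      rw [hL', AddSubgroup.coe_map]
      have : (⇑(projAlong b p).toAddMonoidHom '' (L : Set (Fin (m + 1) → ℝ)))
        = projAlong b p '' (L : Set (Fin (m + 1) → ℝ)) := rfl
      rw [this, Submodule.span_image, hspan, Submodule.map_top, LinearMap.range_eq_top]
      exact projAlong_surjective b p) (by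
      intro w hw hdet
      choose v hv hvw _ using fun i => exists_lift L b hbL p hbp (w i) (hw i)
      have h := abs_det_cons_eq b p hbp v
      simp only [hvw] at h
      have hpos : 0 < |b p| * |(Matrix.of fun i => w i).det| :=
        mul_pos hbpos (abs_pos.mpr hdet)
      have := hV (Fin.cons b v) (fun i => by
        refine Fin.cases ?_ (fun j => ?_) i
        · simpa using hbL
        · simpa using hv j) (by
          rw [← abs_pos, h]; exact hpos)
      rw [h] at this
      rw [div_le_iff₀ hbpos]
      linarith)
    have hlow : ∀ i, c' / 2 * |b p| ≤ d' i := by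
      intro i
      obtain ⟨p', w, hw, hw0, -, hwle, -, hd'⟩ := hd'p (Fin.pos i)
      obtain ⟨v, hv, rfl, hvp⟩ := exists_lift L b hbL p hbp w hw
      have hv0 : v ≠ 0 := by rintro rfl; exact hw0 (map_zero _)
      obtain ⟨j, hj⟩ := hmin v hv hv0
      rcases Fin.eq_self_or_eq_succAbove p j with rfl | ⟨j, rfl⟩
      · linarith
      · have h1 := hclose v j
        have h2 := hwle j
        have h3 : |v (p.succAbove j)| ≤ |projAlong b p v j| + |v p| := by
          have := abs_sub_abs_le_abs_sub (v (p.succAbove j)) (projAlong b p v j)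
          rw [abs_sub_comm] at this
          linarith
        nlinarith [hd' i]
    refine ⟨p.insertNth |b p| d', ?_, ?_, ?_, fun _ => ⟨p, b, hbL, ?_, ?_, ?_, ?_, ?_⟩⟩
    · intro i
      rcases Fin.eq_self_or_eq_succAbove p i with rfl | ⟨j, rfl⟩
      · simpa using hbp
      · simpa using hd'pos j
    · rw [Fin.prod_univ_succAbove _ p]
      simp only [Fin.insertNth_apply_same, Fin.insertNth_apply_succAbove]
      rwa [div_le_iff₀' hbpos] at hd'V
    · intro v hv hvs
      by_contra hv0
      have hvp := hvs p
      simp only [Fin.insertNth_apply_same] at hvp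
      have hπ : projAlong b p v = 0 := by
        refine hd'box _ ⟨v, hv, rfl⟩ fun i => ?_
        have h1 := hvs (p.succAbove i)
        simp only [Fin.insertNth_apply_succAbove] at h1
        have h2 := hclose v i
        have h3 : |projAlong b p v i| ≤ |v (p.succAbove i)| + |v p| := by
          have := abs_sub_abs_le_abs_sub (projAlong b p v i) (v (p.succAbove i))
          linarith
        have h4 := hlow i
        have h5 := hd'pos i
        have h6 : c' * (c' / 2) / 2 * |b p| ≤ c' / 2 * d' i := by nlinarith
        have h7 : c' * (c' / 2) / 2 * d' i ≤ c' / 2 * d' i := by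
          have : c' * (c' / 2) / 2 ≤ c' / 2 := by nlinarith
          exact mul_le_mul_of_nonneg_right this h5.le
        linarith
      obtain ⟨j, hj⟩ := hmin v hv hv0
      have hlt : |v p| < |b p| := by
        have : c' * (c' / 2) / 2 ≤ 1 := by nlinarith
        nlinarith
      rcases Fin.eq_self_or_eq_succAbove p j with rfl | ⟨j, rfl⟩
      · linarith
      · have h1 := hclose v j
        rw [hπ] at h1
        simp only [Pi.zero_apply, zero_sub, abs_neg] at h1
        linarith
    · rintro rfl; exact hbp rfl
    · simp
    · simpa using hbmax
    · simpa using hmin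
    · intro i
      have : c' * (c' / 2) / 2 ≤ c' / 2 := by nlinarith
      rcases Fin.eq_self_or_eq_succAbove p i with rfl | ⟨j, rfl⟩
      · simp only [Fin.insertNth_apply_same]
        nlinarith
      · simp only [Fin.insertNth_apply_same, Fin.insertNth_apply_succAbove]
        nlinarith [hlow j]
/-- The nonzero vectors of the lattice `Λ`. -/
def latticeVecs (n : ℕ) (Λ : LatticeSpace n) : Set (Fin n → ℝ) :=
  {v | ∃ g : SLR n, (QuotientGroup.mk g : LatticeSpace n) = Λ ∧
    ∃ m : Fin n → ℤ, m ≠ 0 ∧ v = vecOf n g m}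

theorem vecOf_mul (n : ℕ) (g h : SLR n) (m : Fin n → ℤ) :
    vecOf n (g * h) m = (g : Matrix (Fin n) (Fin n) ℝ).mulVec (vecOf n h m) := by
  simp [vecOf, Matrix.mulVec_mulVec]

theorem inv_mulVec_mulVec (n : ℕ) (g : SLR n) (v : Fin n → ℝ) :
    ((g⁻¹ : SLR n) : Matrix (Fin n) (Fin n) ℝ).mulVec
      ((g : Matrix (Fin n) (Fin n) ℝ).mulVec v) = v := by
  rw [Matrix.mulVec_mulVec, ← Matrix.SpecialLinearGroup.coe_mul, inv_mul_cancel]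
  simp

theorem vecOf_ne_zero (n : ℕ) (g : SLR n) {m : Fin n → ℤ} (hm : m ≠ 0) : vecOf n g m ≠ 0 := by
  intro h
  apply hm
  have := inv_mulVec_mulVec n g (fun i => (m i : ℝ))
  change Matrix.mulVec _ (vecOf n g m) = _ at this
  rw [h, Matrix.mulVec_zero] at this
  ext i
  have := congrFun this i
  simpa using this.symm

theorem mem_latticeVecs_mk (n : ℕ) (g : SLR n) (v : Fin n → ℝ) :
    v ∈ latticeVecs n (QuotientGroup.mk g) ↔ ∃ m : Fin n → ℤ, m ≠ 0 ∧ v = vecOf n g m := by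
  constructor
  · rintro ⟨g', hg', m, hm, rfl⟩
    rw [eq_comm, QuotientGroup.eq] at hg'
    obtain ⟨γ, hγ⟩ := hg'
    have hg : g' = g * Matrix.SpecialLinearGroup.map (Int.castRingHom ℝ) γ := by
      rw [hγ]; group
    have hv : vecOf n g' m = vecOf n g ((γ : Matrix (Fin n) (Fin n) ℤ).mulVec m) := by
      rw [hg, vecOf_mul]
      unfold vecOf
      congr 1
      ext i
      simp [Matrix.mulVec, dotProduct]
    refine ⟨_, ?_, hv⟩
    intro h0
    rw [h0] at hv
    exact vecOf_ne_zero n g' hm (by rw [hv]; ext i; simp [vecOf, Matrix.mulVec, dotProduct])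
  · rintro ⟨m, hm, rfl⟩
    exact ⟨g, rfl, m, hm, rfl⟩

theorem mem_latticeVecs_smul (n : ℕ) (h : SLR n) (Λ : LatticeSpace n) (v : Fin n → ℝ) :
    v ∈ latticeVecs n (h • Λ) ↔
      ∃ w ∈ latticeVecs n Λ, v = (h : Matrix (Fin n) (Fin n) ℝ).mulVec w := by
  induction Λ using QuotientGroup.induction_on with
  | H g =>
    have : h • (QuotientGroup.mk g : LatticeSpace n) = QuotientGroup.mk (h * g) := rfl
    rw [this, mem_latticeVecs_mk]
    constructor
    · rintro ⟨m, hm, rfl⟩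
      exact ⟨vecOf n g m, (mem_latticeVecs_mk n g _).2 ⟨m, hm, rfl⟩, vecOf_mul n h g m⟩
    · rintro ⟨w, hw, rfl⟩
      obtain ⟨m, hm, rfl⟩ := (mem_latticeVecs_mk n g _).1 hw
      exact ⟨m, hm, (vecOf_mul n h g m).symm⟩

theorem ne_zero_of_mem_latticeVecs {n : ℕ} {Λ : LatticeSpace n} {v : Fin n → ℝ}
    (hv : v ∈ latticeVecs n Λ) : v ≠ 0 := by
  obtain ⟨g, -, m, hm, rfl⟩ := hv
  exact vecOf_ne_zero n g hm

theorem vecOf_sub (n : ℕ) (g : SLR n) (m m' : Fin n → ℤ) :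
    vecOf n g (m - m') = vecOf n g m - vecOf n g m' := by
  unfold vecOf
  rw [← Matrix.mulVec_sub]
  congr 1
  ext i
  simp

theorem sub_mem_latticeVecs {n : ℕ} {Λ : LatticeSpace n} {v w : Fin n → ℝ}
    (hv : v ∈ latticeVecs n Λ) (hw : w ∈ latticeVecs n Λ) (hne : v ≠ w) :
    v - w ∈ latticeVecs n Λ := by
  induction Λ using QuotientGroup.induction_on with
  | H g =>
    rw [mem_latticeVecs_mk] at hv hw ⊢
    obtain ⟨m, -, rfl⟩ := hv
    obtain ⟨m', -, rfl⟩ := hw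
    refine ⟨m - m', ?_, (vecOf_sub n g m m').symm⟩
    rw [sub_ne_zero]
    rintro rfl
    exact hne rfl

theorem isOpen_setOf_latticeVecs_inter {n : ℕ} {U : Set (Fin n → ℝ)} (hU : IsOpen U) :
    IsOpen {Λ : LatticeSpace n | ∃ v ∈ latticeVecs n Λ, v ∈ U} := by
  rw [← (QuotientGroup.isQuotientMap_mk (N := latticeGamma n)).isOpen_preimage]
  have : (QuotientGroup.mk ⁻¹' {Λ : LatticeSpace n | ∃ v ∈ latticeVecs n Λ, v ∈ U} : Set (SLR n)) =
      ⋃ m : {m : Fin n → ℤ // m ≠ 0}, {g : SLR n | vecOf n g m ∈ U} := by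
    ext g
    simp only [Set.mem_preimage, Set.mem_ofPred_eq, mem_latticeVecs_mk, Set.mem_iUnion]
    constructor
    · rintro ⟨v, ⟨m, hm, rfl⟩, hv⟩
      exact ⟨⟨m, hm⟩, hv⟩
    · rintro ⟨⟨m, hm⟩, hv⟩
      exact ⟨_, ⟨m, hm, rfl⟩, hv⟩
  rw [this]
  refine isOpen_iUnion fun m => hU.preimage ?_
  have hc : Continuous fun g : SLR n => (g : Matrix (Fin n) (Fin n) ℝ) := continuous_induced_dom
  exact hc.matrix_mulVec continuous_const

theorem measurableSet_setOf_latticeVecs_inter {n : ℕ} {U : Set (Fin n → ℝ)} (hU : IsOpen U) :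
    MeasurableSet {Λ : LatticeSpace n | ∃ v ∈ latticeVecs n Λ, v ∈ U} := by
  have : BorelSpace (LatticeSpace n) := ⟨rfl⟩
  exact (isOpen_setOf_latticeVecs_inter hU).measurableSet

/-- Lattices with a vector in a tube of size `d p` around the axis `p`, and no nonzero vector in the
box with sides `c * d i`. -/
def tubeEvent (n : ℕ) (c : ℝ) (p : Fin n) (d : Fin n → ℝ) : Set (LatticeSpace n) :=
  {Λ | (∃ v ∈ latticeVecs n Λ, d p / 2 < |v p| ∧ ∀ i, |v i| < 2 * d p) ∧
    ∀ v ∈ latticeVecs n Λ, ∃ i, c * d i ≤ |v i|}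

theorem measurableSet_smul_preimage_tubeEvent (n : ℕ) (c : ℝ) (p : Fin n) (d : Fin n → ℝ)
    (h : SLR n) : MeasurableSet ((fun Λ => h • Λ) ⁻¹' tubeEvent n c p d) := by
  have hc : Continuous fun v : Fin n → ℝ => (h : Matrix (Fin n) (Fin n) ℝ).mulVec v :=
    continuous_const.matrix_mulVec continuous_id
  have hci : ∀ i, Continuous fun v : Fin n → ℝ => |(h : Matrix (Fin n) (Fin n) ℝ).mulVec v i| :=
    fun i => ((continuous_apply i).comp hc).abs
  have hU : IsOpen {v : Fin n → ℝ | d p / 2 < |(h : Matrix (Fin n) (Fin n) ℝ).mulVec v p| ∧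
      ∀ i, |(h : Matrix (Fin n) (Fin n) ℝ).mulVec v i| < 2 * d p} := by
    have hV : IsOpen {v : Fin n → ℝ |
        ∀ i, |(h : Matrix (Fin n) (Fin n) ℝ).mulVec v i| < 2 * d p} := by
      simp only [Set.ofPred_forall]
      exact isOpen_iInter_of_finite fun i => isOpen_lt (hci i) continuous_const
    exact (isOpen_lt continuous_const (hci p)).inter hV
  have hW : IsOpen {v : Fin n → ℝ |
      ∀ i, |(h : Matrix (Fin n) (Fin n) ℝ).mulVec v i| < c * d i} := by
    simp only [Set.ofPred_forall]
    exact isOpen_iInter_of_finite fun i => isOpen_lt (hci i) continuous_const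
  convert (measurableSet_setOf_latticeVecs_inter hU).inter
    (measurableSet_setOf_latticeVecs_inter hW).compl using 1
  ext Λ
  simp only [tubeEvent, Set.mem_preimage, Set.mem_ofPred_eq, mem_latticeVecs_smul, Set.mem_inter_iff,
    Set.mem_compl_iff, not_exists, not_and, not_forall, not_lt]
  constructor
  · rintro ⟨⟨_, ⟨w, hw, rfl⟩, h1⟩, h2⟩
    exact ⟨⟨w, hw, h1⟩, fun v hv => h2 _ ⟨v, hv, rfl⟩⟩
  · rintro ⟨⟨w, hw, h1⟩, h2⟩
    exact ⟨⟨_, ⟨w, hw, rfl⟩, h1⟩, by rintro _ ⟨v, hv, rfl⟩; exact h2 v hv⟩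

/-- The shear `v ↦ v - v p • x`, for `x` with `x p = 0`. -/
def shear (n : ℕ) (p : Fin n) (x : Fin n → ℝ) (hx : x p = 0) : SLR n :=
  ⟨Matrix.of fun i j => (1 : Matrix (Fin n) (Fin n) ℝ) i j +
      (-x i) * (1 : Matrix (Fin n) (Fin n) ℝ) p j, by
    rw [← Matrix.det_one (n := Fin n) (R := ℝ)]
    exact Matrix.det_eq_of_forall_row_eq_smul_add_const (fun i => -x i) p (by simp [hx])
      fun i j => rfl⟩

theorem shear_mulVec (n : ℕ) (p : Fin n) (x : Fin n → ℝ) (hx : x p = 0) (v : Fin n → ℝ)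
    (i : Fin n) :
    (shear n p x hx : Matrix (Fin n) (Fin n) ℝ).mulVec v i = v i - x i * v p := by
  simp [shear, Matrix.mulVec, dotProduct, add_mul, Finset.sum_add_distrib, Matrix.one_apply,
    sub_eq_add_neg]

/-- A lattice without nonzero vectors in the box with sides `ε * d i` lies in boundedly many
sheared copies of the tube event. -/
theorem card_le_of_tube {n : ℕ} {Λ : LatticeSpace n} {p : Fin n} {d : Fin n → ℝ} {ε R : ℝ}
    (hε : 0 < ε) (hd : ∀ i, 0 < d i) (S : Finset (Fin n → ℕ))
    (hempty : ∀ v ∈ latticeVecs n Λ, ∃ i, ε * d i ≤ |v i|)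
    (hS : ∀ a ∈ S, ∃ v ∈ latticeVecs n Λ, d p / 2 < |v p| ∧
      (∀ i, |v i - 8 * a i * v p| < 2 * d p) ∧ ∀ i, |v i| ≤ R * d i) :
    S.card ≤ (2 * ⌈R / ε⌉₊ + 2) ^ n := by
  classical
  choose! v hv hvp htube hR using hS
  set K : ℕ := ⌈R / ε⌉₊
  let cell : (Fin n → ℕ) → Fin n → ℤ := fun a i => ⌊v a i / (ε * d i)⌋
  have hmaps : ∀ a ∈ S, cell a ∈ Fintype.piFinset fun _ : Fin n => Finset.Icc (-(K : ℤ) - 1) K := by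
    intro a ha
    rw [Fintype.mem_piFinset]
    intro i
    have hpos : 0 < ε * d i := mul_pos hε (hd i)
    have hK : R / ε ≤ K := Nat.le_ceil _
    rw [div_le_iff₀ hε] at hK
    have h1 := abs_le.mp (hR a ha i)
    have h2 : R * d i ≤ K * (ε * d i) := by nlinarith [hd i]
    rw [Finset.mem_Icc]
    constructor
    · rw [Int.le_floor, le_div_iff₀ hpos]
      push_cast
      nlinarith
    · rw [← Int.lt_add_one_iff, Int.floor_lt, div_lt_iff₀ hpos]
      push_cast
      nlinarith
  have hinj : Set.InjOn cell S := by
    intro a ha b hb hab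
    have hvab : v a = v b := by
      by_contra hne
      obtain ⟨i, hi⟩ := hempty _ (sub_mem_latticeVecs (hv a ha) (hv b hb) hne)
      have hpos : 0 < ε * d i := mul_pos hε (hd i)
      have h1 := Int.abs_sub_lt_one_of_floor_eq_floor (congrFun hab i)
      rw [← sub_div, abs_div, abs_of_pos hpos, div_lt_one hpos] at h1
      exact absurd h1 (not_lt.mpr hi)
    ext i
    by_contra hne
    have h1 : (1 : ℝ) ≤ |(a i : ℝ) - b i| := by
      have : (1 : ℤ) ≤ |(a i : ℤ) - b i| := Int.one_le_abs (sub_ne_zero.mpr (by exact_mod_cast hne))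
      exact_mod_cast this
    have h2 := htube a ha i
    have h3 := htube b hb i
    rw [← hvab] at h3
    have h4 : |8 * ((a i : ℝ) - b i) * v a p| < 4 * d p := by
      have : 8 * ((a i : ℝ) - b i) * v a p =
        (v a i - 8 * b i * v a p) - (v a i - 8 * a i * v a p) := by ring
      rw [this]
      refine (abs_sub _ _).trans_lt ?_
      linarith
    rw [abs_mul, abs_mul, abs_of_pos (by norm_num : (0 : ℝ) < 8)] at h4
    nlinarith [hvp a ha, abs_nonneg (v a p)]
  have := Finset.card_le_card_of_injOn cell hmaps hinj
  refine this.trans (le_of_eq ?_)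
  rw [Fintype.card_piFinset]
  simp only [Int.card_Icc, Finset.prod_const, Finset.card_univ, Fintype.card_fin]
  congr 1
  omega

theorem measure_tubeEvent_le (n : ℕ) (c J : ℝ) (hc : 0 < c) (hJ : 1 ≤ J) : ∃ Q : ℝ, 0 ≤ Q ∧
    ∀ (μ : Measure (LatticeSpace n)) [IsProbabilityMeasure μ]
      (_ : ∀ (g : SLR n) (s : Set (LatticeSpace n)), μ ((fun x => g • x) ⁻¹' s) = μ s)
      (p : Fin n) (d : Fin n → ℝ), (∀ i, 0 < d i) → (∀ i, d p ≤ J * d i) →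
      μ (tubeEvent n c p d) ≤ ENNReal.ofReal (Q * ∏ i, d p / d i) := by
  classical
  set N : ℕ := (2 * ⌈(2 * J + 16) / (c / 9)⌉₊ + 2) ^ n with hN
  refine ⟨N, by positivity, ?_⟩
  intro μ _ hinv p d hd hdJ
  let A : Finset (Fin n → ℕ) :=
    Fintype.piFinset fun i => if i = p then {0} else Finset.range ⌈d i / d p⌉₊
  have hAp : ∀ a ∈ A, a p = 0 := fun a ha => by
    have := Fintype.mem_piFinset.mp ha p
    simpa using this
  have hAi : ∀ a ∈ A, ∀ i, (a i : ℝ) * d p ≤ d i := fun a ha i => by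
    by_cases hi : i = p
    · subst hi; simp [hAp a ha, (hd i).le]
    · have := Fintype.mem_piFinset.mp ha i
      rw [if_neg hi, Finset.mem_range, Nat.lt_ceil, lt_div_iff₀ (hd p)] at this
      exact this.le
  let sh : (Fin n → ℕ) → SLR n := fun a =>
    if h : a p = 0 then shear n p (fun i => 8 * (a i : ℝ)) (by simp [h]) else 1
  have hsh : ∀ a ∈ A, ∀ (v : Fin n → ℝ) i,
      (sh a : Matrix (Fin n) (Fin n) ℝ).mulVec v i = v i - 8 * a i * v p := by
    intro a ha v i
    simp only [sh, dif_pos (hAp a ha), shear_mulVec]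
  let E : (Fin n → ℕ) → Set (LatticeSpace n) := fun a => (fun Λ => sh a • Λ) ⁻¹' tubeEvent n c p d
  have hmult : ∀ Λ, (A.filter fun a => Λ ∈ E a).card ≤ N := by
    intro Λ
    rcases (A.filter fun a => Λ ∈ E a).eq_empty_or_nonempty with h0 | ⟨a₀, ha₀⟩
    · simp [h0]
    rw [Finset.mem_filter] at ha₀
    refine card_le_of_tube (Λ := Λ) (p := p) (d := d) (by positivity) hd _ ?_ ?_
    · intro v hv
      obtain ⟨i, hi⟩ := ha₀.2.2 _ ((mem_latticeVecs_smul n _ Λ _).2 ⟨v, hv, rfl⟩)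
      rw [hsh a₀ ha₀.1] at hi
      by_contra! hlt
      have h1 := hlt i
      have h2 := hlt p
      have h3 := hAi a₀ ha₀.1 i
      have h4 : |v i - 8 * a₀ i * v p| ≤ |v i| + 8 * a₀ i * |v p| := by
        refine (abs_sub _ _).trans ?_
        rw [abs_mul, abs_of_nonneg (by positivity : (0 : ℝ) ≤ 8 * a₀ i)]
      have h5 : 8 * (a₀ i : ℝ) * |v p| ≤ 8 * a₀ i * (c / 9 * d p) := by gcongr
      have h6 : 8 * (a₀ i : ℝ) * (c / 9 * d p) ≤ 8 * (c / 9 * d i) := by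
        have : 8 * (c / 9) * (a₀ i * d p) ≤ 8 * (c / 9) * d i := by gcongr
        linarith
      linarith
    · intro a ha
      rw [Finset.mem_filter] at ha
      obtain ⟨_, hw, h1, h2⟩ := ha.2.1
      obtain ⟨v, hv, rfl⟩ := (mem_latticeVecs_smul n _ Λ _).1 hw
      simp only [hsh a ha.1, hAp a ha.1, Nat.cast_zero, mul_zero, zero_mul, sub_zero] at h1 h2
      have h2p := h2 p
      simp only [hAp a ha.1, Nat.cast_zero, mul_zero, zero_mul, sub_zero] at h2p
      refine ⟨v, hv, h1, h2, fun i => ?_⟩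
      have h3 := hAi a ha.1 i
      have h4 : |v i| ≤ |v i - 8 * a i * v p| + 8 * a i * |v p| := by
        have := abs_add_le (v i - 8 * a i * v p) (8 * a i * v p)
        rw [sub_add_cancel, abs_mul (8 * (a i : ℝ)),
          abs_of_nonneg (by positivity : (0 : ℝ) ≤ 8 * a i)] at this
        exact this
      have h5 : 8 * (a i : ℝ) * |v p| ≤ 8 * a i * (2 * d p) := by gcongr
      linarith [h2 i, hdJ i]
  have hsum : (A.card : ℝ≥0∞) * μ (tubeEvent n c p d) ≤ N := by
    calc (A.card : ℝ≥0∞) * μ (tubeEvent n c p d) = ∑ a ∈ A, μ (E a) := by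
          rw [Finset.sum_congr rfl fun a _ => hinv (sh a) (tubeEvent n c p d)]
          simp
      _ = ∑ a ∈ A, ∫⁻ Λ, (E a).indicator 1 Λ ∂μ := by
          refine Finset.sum_congr rfl fun a _ => ?_
          rw [lintegral_indicator_one (measurableSet_smul_preimage_tubeEvent n c p d (sh a))]
      _ = ∫⁻ Λ, ∑ a ∈ A, (E a).indicator 1 Λ ∂μ := by
          rw [lintegral_finsetSum]
          intro a _
          exact measurable_one.indicator (measurableSet_smul_preimage_tubeEvent n c p d (sh a))
      _ ≤ ∫⁻ _, (N : ℝ≥0∞) ∂μ := by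
          refine lintegral_mono fun Λ => ?_
          have : ∑ a ∈ A, (E a).indicator (1 : LatticeSpace n → ℝ≥0∞) Λ =
              ((A.filter fun a => Λ ∈ E a).card : ℝ≥0∞) := by
            simp [Set.indicator_apply]
          rw [this]
          exact Nat.cast_le.mpr (hmult Λ)
      _ = N := by simp
  have hcard : ∏ i, d i / d p ≤ (A.card : ℝ) := by
    rw [Fintype.card_piFinset]
    push_cast
    refine Finset.prod_le_prod (fun i _ => (div_pos (hd i) (hd p)).le) fun i _ => ?_
    by_cases hi : i = p
    · subst hi; simp [(hd i).ne']
    · rw [if_neg hi, Finset.card_range]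
      exact Nat.le_ceil _
  have hfin : μ (tubeEvent n c p d) ≠ ∞ := measure_ne_top _ _
  have hreal : (A.card : ℝ) * (μ (tubeEvent n c p d)).toReal ≤ N := by
    have := ENNReal.toReal_mono (by simp) hsum
    simpa using this
  rw [← ENNReal.ofReal_toReal hfin]
  refine ENNReal.ofReal_le_ofReal ?_
  have hP : 0 < ∏ i, d i / d p := Finset.prod_pos fun i _ => div_pos (hd i) (hd p)
  have hPinv : ∏ i, d p / d i = (∏ i, d i / d p)⁻¹ := by
    rw [← Finset.prod_inv_distrib]
    exact Finset.prod_congr rfl fun i _ => (inv_div _ _).symm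
  rw [hPinv, ← div_eq_mul_inv, le_div_iff₀ hP]
  have := mul_le_mul_of_nonneg_right hcard (ENNReal.toReal_nonneg (a := μ (tubeEvent n c p d)))
  linarith

/-- The lattice `g ℤⁿ`, as a subgroup of `ℝⁿ`. -/
def latticeSubgroup (n : ℕ) (g : SLR n) : AddSubgroup (Fin n → ℝ) where
  carrier := {v | ∃ m : Fin n → ℤ, v = vecOf n g m}
  zero_mem' := ⟨0, by ext i; simp [vecOf, Matrix.mulVec, dotProduct]⟩
  add_mem' := by
    rintro _ _ ⟨m, rfl⟩ ⟨m', rfl⟩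
    refine ⟨m + m', ?_⟩
    ext i
    simp [vecOf, Matrix.mulVec, dotProduct, mul_add, Finset.sum_add_distrib]
  neg_mem' := by
    rintro _ ⟨m, rfl⟩
    refine ⟨-m, ?_⟩
    ext i
    simp [vecOf, Matrix.mulVec, dotProduct]

theorem mem_latticeSubgroup {n : ℕ} {g : SLR n} {v : Fin n → ℝ} :
    v ∈ latticeSubgroup n g ↔ ∃ m : Fin n → ℤ, v = vecOf n g m := Iff.rfl

theorem abs_mulVec_le {n : ℕ} (A : Matrix (Fin n) (Fin n) ℝ) {K R : ℝ} (hK : ∀ i j, |A i j| ≤ K)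
    {v : Fin n → ℝ} (hv : ∀ i, |v i| ≤ R) (i : Fin n) : |A.mulVec v i| ≤ n * (K * R) := by
  calc |A.mulVec v i| ≤ ∑ j, |A i j * v j| :=
        Finset.abs_sum_le_sum_abs (fun j => A i j * v j) Finset.univ
    _ ≤ ∑ _j : Fin n, K * R := by
        refine Finset.sum_le_sum fun j _ => ?_
        rw [abs_mul]
        exact mul_le_mul (hK i j) (hv j) (abs_nonneg _) ((abs_nonneg _).trans (hK i j))
    _ = n * (K * R) := by simp

theorem latticeSubgroup_finite (n : ℕ) (g : SLR n) (R : ℝ) :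
    {v | v ∈ latticeSubgroup n g ∧ ∀ i, |v i| ≤ R}.Finite := by
  set A : Matrix (Fin n) (Fin n) ℝ := ((g⁻¹ : SLR n) : Matrix (Fin n) (Fin n) ℝ)
  set K : ℝ := ∑ i, ∑ j, |A i j|
  have hK : ∀ i j, |A i j| ≤ K := fun i j =>
    (Finset.single_le_sum (f := fun j => |A i j|) (fun j _ => abs_nonneg _)
      (Finset.mem_univ j)).trans
      (Finset.single_le_sum (f := fun i => ∑ j, |A i j|)
        (fun i _ => Finset.sum_nonneg fun j _ => abs_nonneg _) (Finset.mem_univ i))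
  set M : ℤ := ⌈(n : ℝ) * (K * R)⌉
  refine ((Set.Finite.pi' (ι := Fin n) (t := fun _ => Set.Icc (-M) M)
    fun _ => Set.finite_Icc _ _).image (vecOf n g)).subset ?_
  rintro _ ⟨⟨m, rfl⟩, hR⟩
  refine ⟨m, fun i => ?_, rfl⟩
  have h := abs_mulVec_le A hK hR i
  have h2 : A.mulVec (vecOf n g m) = fun i => (m i : ℝ) := inv_mulVec_mulVec n g _
  rw [h2] at h
  have h3 : |(m i : ℝ)| ≤ M := h.trans (Int.le_ceil _)
  have h4 : |m i| ≤ M := by exact_mod_cast h3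
  exact abs_le.mp h4

theorem span_latticeSubgroup (n : ℕ) (g : SLR n) :
    Submodule.span ℝ (latticeSubgroup n g : Set (Fin n → ℝ)) = ⊤ := by
  classical
  rw [eq_top_iff]
  intro x _
  have hx : x = ∑ j, ((g⁻¹ : SLR n) : Matrix (Fin n) (Fin n) ℝ).mulVec x j •
      vecOf n g (Pi.single j 1) := by
    have h := inv_mulVec_mulVec n g⁻¹ x
    rw [inv_inv] at h
    conv_lhs => rw [← h]
    ext i
    simp only [vecOf, Matrix.mulVec, dotProduct, Finset.sum_apply, Pi.smul_apply, smul_eq_mul,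
      Pi.single_apply]
    refine Finset.sum_congr rfl fun j _ => ?_
    simp
    ring
  rw [hx]
  exact Submodule.sum_mem _ fun j _ => Submodule.smul_mem _ _ (Submodule.subset_span ⟨_, rfl⟩)

theorem one_le_abs_det_of_mem (n : ℕ) (g : SLR n) (w : Fin n → Fin n → ℝ)
    (hw : ∀ i, w i ∈ latticeSubgroup n g) (hdet : (Matrix.of w).det ≠ 0) :
    1 ≤ |(Matrix.of w).det| := by
  choose m hm using hw
  have h : Matrix.of w = ((Matrix.of m).map (Int.cast : ℤ → ℝ)) *
      (g : Matrix (Fin n) (Fin n) ℝ)ᵀ := by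
    ext i j
    simp [hm, vecOf, Matrix.mulVec, dotProduct, Matrix.mul_apply, mul_comm]
  have h2 : (Matrix.of w).det = ((Matrix.of m).det : ℝ) := by
    rw [h, Matrix.det_mul, Matrix.det_transpose, g.2, mul_one]
    exact (Int.cast_det _).symm
  rw [h2] at hdet ⊢
  exact_mod_cast Int.one_le_abs (by exact_mod_cast hdet)

/-- Every unimodular lattice with a vector of sup norm at most `r` has a tube presentation whose
side lengths are `r` times powers of two. -/
theorem exists_mem_tubeEvent (n : ℕ) : ∃ c : ℝ, 0 < c ∧ ∃ J : ℕ, ∀ (Λ : LatticeSpace n) (r : ℝ),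
    0 < r → (∃ v ∈ latticeVecs n Λ, ∀ i, |v i| ≤ r) →
    ∃ (p : Fin n) (j : ℕ) (e : Fin n → ℕ), e p = J ∧
      1 ≤ ∏ i, 2 * (r * (2 : ℝ) ^ ((e i : ℤ) - j - J)) ∧
      Λ ∈ tubeEvent n c p fun i => r * (2 : ℝ) ^ ((e i : ℤ) - j - J) := by
  obtain ⟨c, hc0, hc1, H⟩ := exists_empty_box n
  obtain ⟨J, hJ⟩ := pow_unbounded_of_one_lt (2 / c) (one_lt_two : (1 : ℝ) < 2)
  refine ⟨c, hc0, J, ?_⟩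
  intro Λ r hr hv
  induction Λ using QuotientGroup.induction_on with
  | H g =>
    obtain ⟨d, hd, hd1, hbox, hp⟩ := H (latticeSubgroup n g) 1 (latticeSubgroup_finite n g)
      (span_latticeSubgroup n g) (one_le_abs_det_of_mem n g)
    obtain ⟨v, hvL, hvr⟩ := hv
    have hmem : ∀ w, w ∈ latticeVecs n (QuotientGroup.mk g) ↔ w ∈ latticeSubgroup n g ∧ w ≠ 0 := by
      intro w
      rw [mem_latticeVecs_mk, mem_latticeSubgroup]
      constructor
      · rintro ⟨m, hm, rfl⟩
        exact ⟨⟨m, rfl⟩, vecOf_ne_zero n g hm⟩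
      · rintro ⟨⟨m, rfl⟩, h0⟩
        refine ⟨m, ?_, rfl⟩
        rintro rfl
        exact h0 (by ext i; simp [vecOf, Matrix.mulVec, dotProduct])
    have hn : 0 < n := by
      obtain ⟨j, -⟩ := Function.ne_iff.mp (ne_zero_of_mem_latticeVecs hvL)
      exact j.pos
    obtain ⟨p, b, hbL, hb0, hbp, hble, hmin, hcd⟩ := hp hn
    have hdp : d p ≤ r := by
      obtain ⟨i, hi⟩ := hmin v ((hmem v).1 hvL).1 ((hmem v).1 hvL).2
      exact hi.trans (hvr i)
    have hk : ∀ i, ∃ k : ℤ, r * 2 ^ k ≤ d i ∧ d i < 2 * (r * 2 ^ k) := by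
      intro i
      obtain ⟨k, hk1, hk2⟩ := exists_mem_Ico_zpow (div_pos (hd i) hr) (one_lt_two : (1 : ℝ) < 2)
      rw [le_div_iff₀ hr] at hk1
      rw [div_lt_iff₀ hr, zpow_add_one₀ two_ne_zero] at hk2
      exact ⟨k, by linarith, by linarith⟩
    choose k hk1 hk2 using hk
    have hkp : k p ≤ 0 := by
      by_contra! h
      have h1 : (1 : ℝ) < 2 ^ k p := one_lt_zpow₀ one_lt_two h
      nlinarith [hk1 p]
    have hki : ∀ i, k p - J ≤ k i := by
      intro i
      by_contra! h
      have h1 : (2 : ℝ) ^ k i ≤ 2 ^ (k p - J) := zpow_le_zpow_right₀ one_le_two h.le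
      rw [zpow_sub₀ two_ne_zero, zpow_natCast, le_div_iff₀ (by positivity)] at h1
      rw [div_lt_iff₀ hc0] at hJ
      have h2 := hk2 i
      have h3 := hk1 p
      have h4 := hcd i
      have h5 : c * (r * 2 ^ k p) ≤ c * d p := by gcongr
      have h6 : c * (r * (2 ^ k i * 2 ^ J)) ≤ c * (r * 2 ^ k p) := by gcongr
      have h7 : (r * 2 ^ k i) * 2 < (r * 2 ^ k i) * (2 ^ J * c) :=
        mul_lt_mul_of_pos_left hJ (by positivity)
      linarith
    have hexp : ∀ i, (((k i - k p + J).toNat : ℕ) : ℤ) - ((-k p).toNat : ℤ) - J = k i := by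
      intro i
      have := hki i
      omega
    refine ⟨p, (-k p).toNat, fun i => (k i - k p + J).toNat, by simp, ?_, ?_, ?_⟩
    · simp only [hexp]
      exact hd1.trans (Finset.prod_le_prod (fun i _ => (hd i).le) fun i _ => (hk2 i).le)
    · simp only [hexp]
      refine ⟨b, (hmem b).2 ⟨hbL, hb0⟩, ?_, fun i => (hble i).trans_lt (hk2 p)⟩
      rw [hbp]
      linarith [hk1 p, hd p]
    · simp only [hexp]
      intro w hw
      by_contra! h
      refine ((hmem w).1 hw).2 (hbox w ((hmem w).1 hw).1 fun i => (h i).trans_le ?_)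
      have := hk1 i
      gcongr

theorem tsum_pi_prod (n : ℕ) (f : ℕ → ℝ≥0∞) :
    ∑' e : Fin n → ℕ, ∏ i, f (e i) = (∑' k, f k) ^ n := by
  induction n with
  | zero => simp
  | succ m ih =>
    rw [← (Fin.consEquiv fun _ : Fin (m + 1) => ℕ).tsum_eq, ENNReal.tsum_prod']
    simp only [Fin.consEquiv, Equiv.coe_fn_mk, Fin.prod_univ_succ, Fin.cons_zero, Fin.cons_succ,
      ENNReal.tsum_mul_left, ih, ENNReal.tsum_mul_right]
    ring

/-- Small vectors are rare: the exponent can be taken arbitrarily close to `n`. -/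
theorem measure_small_vector_le (n : ℕ) (hn : 0 < n) (θ : ℝ) (hθ0 : 0 < θ) (hθ1 : θ < 1)
    (μ : Measure (LatticeSpace n)) [IsProbabilityMeasure μ]
    (hinv : ∀ (g : SLR n) (s : Set (LatticeSpace n)), μ ((fun x => g • x) ⁻¹' s) = μ s) :
    ∃ C : ℝ≥0∞, C ≠ ∞ ∧ ∀ r : ℝ, 0 < r →
      μ {Λ | ∃ v ∈ latticeVecs n Λ, ∀ i, |v i| ≤ r} ≤ C * ENNReal.ofReal (r ^ (θ * n)) := by
  obtain ⟨c, hc, J, hcover⟩ := exists_mem_tubeEvent n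
  obtain ⟨Q, hQ, hQm⟩ := measure_tubeEvent_le n c (2 ^ J) hc (one_le_pow₀ one_le_two)
  set q₁ : ℝ := 2 ^ (-(θ * n)) with hq₁
  set q₂ : ℝ := 2 ^ (-(1 - θ)) with hq₂
  have hnR : (0 : ℝ) < n := by exact_mod_cast hn
  have hq₁0 : 0 < q₁ := by positivity
  have hq₂0 : 0 < q₂ := by positivity
  have hq₁1 : q₁ < 1 := Real.rpow_lt_one_of_one_lt_of_neg one_lt_two (by nlinarith)
  have hq₂1 : q₂ < 1 := Real.rpow_lt_one_of_one_lt_of_neg one_lt_two (by linarith)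
  set B : ℝ := Q * ((2 : ℝ) ^ (θ + J * (1 - θ))) ^ n with hB
  have hB0 : 0 ≤ B := by positivity
  refine ⟨n * (ENNReal.ofReal B * ((∑' j : ℕ, ENNReal.ofReal q₁ ^ j) *
    (∑' k : ℕ, ENNReal.ofReal q₂ ^ k) ^ n)), ?_, ?_⟩
  · have hgeom : ∀ q : ℝ, q < 1 → ∑' j : ℕ, ENNReal.ofReal q ^ j ≠ ∞ := by
      intro q hq
      rw [ENNReal.tsum_geometric]
      refine ENNReal.inv_ne_top.2 (tsub_pos_of_lt ?_).ne'
      rw [← ENNReal.ofReal_one]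
      exact (ENNReal.ofReal_lt_ofReal_iff one_pos).2 hq
    exact ENNReal.mul_ne_top (ENNReal.natCast_ne_top n) (ENNReal.mul_ne_top ENNReal.ofReal_ne_top
      (ENNReal.mul_ne_top (hgeom _ hq₁1) (ENNReal.pow_ne_top (hgeom _ hq₂1))))
  intro r hr
  let D : ℕ → (Fin n → ℕ) → Fin n → ℝ := fun j e i => r * (2 : ℝ) ^ ((e i : ℤ) - j - J)
  let F : Fin n × ℕ × (Fin n → ℕ) → Set (LatticeSpace n) := fun x =>
    {Λ | x.2.2 x.1 = J ∧ 1 ≤ ∏ i, 2 * D x.2.1 x.2.2 i ∧ Λ ∈ tubeEvent n c x.1 (D x.2.1 x.2.2)}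
  have hsub : {Λ : LatticeSpace n | ∃ v ∈ latticeVecs n Λ, ∀ i, |v i| ≤ r} ⊆ ⋃ x, F x := by
    intro Λ hΛ
    obtain ⟨p, j, e, h1, h2, h3⟩ := hcover Λ r hr hΛ
    exact Set.mem_iUnion.2 ⟨(p, j, e), h1, h2, h3⟩
  have hbound : ∀ x, μ (F x) ≤ ENNReal.ofReal (r ^ (θ * n)) * (ENNReal.ofReal B *
      (ENNReal.ofReal q₁ ^ x.2.1 * ∏ i, ENNReal.ofReal q₂ ^ (x.2.2 i))) := by
    rintro ⟨p, j, e⟩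
    by_cases hcond : e p = J ∧ 1 ≤ ∏ i, 2 * D j e i
    swap
    · have : F (p, j, e) = ∅ := by
        ext Λ
        simp only [F, Set.mem_ofPred_eq, Set.mem_empty_iff_false, iff_false]
        rintro ⟨h1, h2, -⟩
        exact hcond ⟨h1, h2⟩
      rw [this, measure_empty]
      exact zero_le
    obtain ⟨hep, hprod⟩ := hcond
    have hDpos : ∀ i, 0 < D j e i := fun i => by positivity
    have hDp : ∀ i, D j e p ≤ 2 ^ J * D j e i := by
      intro i
      have : (2 : ℝ) ^ ((e p : ℤ) - j - J) ≤ 2 ^ J * 2 ^ ((e i : ℤ) - j - J) := by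
        rw [← zpow_natCast, ← zpow_add₀ two_ne_zero]
        refine zpow_le_zpow_right₀ one_le_two ?_
        omega
      calc D j e p = r * (2 : ℝ) ^ ((e p : ℤ) - j - J) := rfl
        _ ≤ r * (2 ^ J * 2 ^ ((e i : ℤ) - j - J)) := by gcongr
        _ = 2 ^ J * D j e i := by simp only [D]; ring
    have hmeas : μ (F (p, j, e)) ≤ ENNReal.ofReal (Q * ∏ i, D j e p / D j e i) :=
      (measure_mono fun Λ hΛ => hΛ.2.2).trans (hQm μ hinv p (D j e) hDpos hDp)
    refine hmeas.trans ?_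
    have hfac : ∀ i, D j e p / D j e i * (2 * D j e i) ^ θ =
        (r ^ θ * 2 ^ (θ + J * (1 - θ)) * 2 ^ (-(θ * j))) * q₂ ^ e i := by
      intro i
      have e1 : D j e p = r * 2 ^ (-(j : ℝ)) := by
        simp only [D, hep]
        rw [← Real.rpow_intCast]
        congr 2
        push_cast
        ring
      have e2 : D j e i = r * 2 ^ ((e i : ℝ) - j - J) := by
        simp only [D]
        rw [← Real.rpow_intCast]
        congr 2
        push_cast
        ring
      rw [e1, e2, hq₂, ← Real.rpow_natCast (2 ^ (-(1 - θ)) : ℝ), ← Real.rpow_mul two_pos.le,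
        Real.mul_rpow two_pos.le (by positivity), Real.mul_rpow hr.le (by positivity),
        ← Real.rpow_mul two_pos.le, mul_div_mul_left _ _ hr.ne', ← Real.rpow_sub two_pos]
      have : ∀ a b c d f g : ℝ, a + b + c = d + f + g →
          (2 : ℝ) ^ a * (2 ^ b * (r ^ θ * 2 ^ c)) = r ^ θ * 2 ^ d * 2 ^ f * 2 ^ g := by
        intro a b c d f g h
        calc (2 : ℝ) ^ a * (2 ^ b * (r ^ θ * 2 ^ c)) = r ^ θ * (2 ^ (a + b + c)) := by
              rw [Real.rpow_add two_pos, Real.rpow_add two_pos]; ring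
          _ = _ := by rw [h, Real.rpow_add two_pos, Real.rpow_add two_pos]; ring
      apply this
      ring
    have hreal : Q * ∏ i, D j e p / D j e i ≤
        r ^ (θ * n) * (B * (q₁ ^ j * ∏ i, q₂ ^ e i)) := by
      have h1 : 1 ≤ (∏ i, 2 * D j e i) ^ θ := Real.one_le_rpow hprod hθ0.le
      rw [← Real.finsetProd_rpow _ _ fun i _ => by have := hDpos i; positivity] at h1
      have h0 : 0 ≤ ∏ i, D j e p / D j e i :=
        Finset.prod_nonneg fun i _ => (div_pos (hDpos p) (hDpos i)).le
      have h2 : ∏ i, D j e p / D j e i ≤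
          ∏ i, (D j e p / D j e i * (2 * D j e i) ^ θ) := by
        rw [Finset.prod_mul_distrib]
        nlinarith
      refine (mul_le_mul_of_nonneg_left h2 hQ).trans (le_of_eq ?_)
      simp only [hfac]
      rw [Finset.prod_mul_distrib]
      simp only [Finset.prod_const, Finset.card_univ, Fintype.card_fin]
      rw [mul_pow, mul_pow, hB, ← Real.rpow_mul_natCast hr.le, ← Real.rpow_mul_natCast two_pos.le
        (-(θ * j)), hq₁, ← Real.rpow_mul_natCast two_pos.le (-(θ * n))]
      have : -(θ * (j : ℝ)) * n = -(θ * n) * j := by ring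
      rw [this]
      ring
    refine (ENNReal.ofReal_le_ofReal hreal).trans (le_of_eq ?_)
    rw [ENNReal.ofReal_mul (by positivity), ENNReal.ofReal_mul hB0,
      ENNReal.ofReal_mul (p := q₁ ^ j) (by positivity), ENNReal.ofReal_pow hq₁0.le,
      ENNReal.ofReal_prod_of_nonneg fun i _ => by positivity]
    simp only [ENNReal.ofReal_pow hq₂0.le]
  calc μ {Λ | ∃ v ∈ latticeVecs n Λ, ∀ i, |v i| ≤ r} ≤ μ (⋃ x, F x) := measure_mono hsub
    _ ≤ ∑' x, μ (F x) := measure_iUnion_le F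
    _ ≤ ∑' x : Fin n × ℕ × (Fin n → ℕ), ENNReal.ofReal (r ^ (θ * n)) * (ENNReal.ofReal B *
      (ENNReal.ofReal q₁ ^ x.2.1 * ∏ i, ENNReal.ofReal q₂ ^ (x.2.2 i))) :=
        ENNReal.tsum_le_tsum hbound
    _ = _ := by
        rw [ENNReal.tsum_mul_left, ENNReal.tsum_mul_left, ENNReal.tsum_prod']
        simp only [ENNReal.tsum_prod', ENNReal.tsum_mul_left, ENNReal.tsum_mul_right]
        rw [tsum_pi_prod n fun k => ENNReal.ofReal q₂ ^ k]
        simp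
        ring

theorem limsup_le_of_eventually_le {f : ℝ → ℝ} {a : ℝ} (ha : 0 ≤ a) (h : ∀ᶠ t in atTop, f t ≤ a) :
    limsup f atTop ≤ a := by
  rw [Filter.limsup_eq]
  by_cases hb : BddBelow {x | ∀ᶠ t in atTop, f t ≤ x}
  · exact csInf_le hb h
  · rw [Real.sInf_of_not_bddBelow hb]
    exact ha

theorem abs_le_eNorm {n : ℕ} (v : Fin n → ℝ) (i : Fin n) : |v i| ≤ eNorm v :=
  PiLp.norm_apply_le ((WithLp.equiv 2 (Fin n → ℝ)).symm v) i

theorem exists_bound_of_continuous {n : ℕ} (u : ℝ → SLR n)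
    (hu : Continuous fun t => (u t : Matrix (Fin n) (Fin n) ℝ)) :
    ∃ K : ℝ, 0 < K ∧ ∀ t ∈ Set.Icc (-1 : ℝ) 0, ∀ i j,
      |(u t : Matrix (Fin n) (Fin n) ℝ) i j| ≤ K := by
  have hcont : Continuous fun t => ∑ i, ∑ j, |(u t : Matrix (Fin n) (Fin n) ℝ) i j| :=
    continuous_finsetSum _ fun i _ => continuous_finsetSum _ fun j _ => (hu.matrix_elem i j).abs
  obtain ⟨K, hK⟩ := (isCompact_Icc (a := (-1 : ℝ)) (b := 0)).bddAbove_image hcont.continuousOn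
  refine ⟨max K 1, by positivity, fun t ht i j => ?_⟩
  refine le_trans ?_ ((hK ⟨t, ht, rfl⟩).trans (le_max_left _ _))
  exact (Finset.single_le_sum (f := fun j => |(u t : Matrix (Fin n) (Fin n) ℝ) i j|)
    (fun j _ => abs_nonneg _) (Finset.mem_univ j)).trans
      (Finset.single_le_sum (f := fun i => ∑ j, |(u t : Matrix (Fin n) (Fin n) ℝ) i j|)
        (fun i _ => Finset.sum_nonneg fun j _ => abs_nonneg _) (Finset.mem_univ i))

/-- Almost surely, the lattices `u_k Λ` have no very short vectors for large integers `k`. -/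
theorem ae_eventually_no_short_vector (n : ℕ) (hn : 0 < n) (μ : Measure (LatticeSpace n))
    [IsProbabilityMeasure μ]
    (hinv : ∀ (g : SLR n) (s : Set (LatticeSpace n)), μ ((fun x => g • x) ⁻¹' s) = μ s)
    (u : ℝ → SLR n) (δ : ℝ) (hδ : 0 < δ) :
    ∀ᵐ Λ ∂μ, ∀ᶠ k : ℕ in atTop, ∀ v ∈ latticeVecs n (u k • Λ),
      ∃ i, (k : ℝ) ^ (-(1 / n + δ)) < |v i| := by
  have hnR : (0 : ℝ) < n := by exact_mod_cast hn
  set θ : ℝ := 1 / (1 + n * δ / 2) with hθ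
  have hpos : (0 : ℝ) < n * δ / 2 := by positivity
  obtain ⟨C, hC, hmeas⟩ := measure_small_vector_le n hn θ (by positivity)
    (by rw [hθ, div_lt_one (by positivity)]; linarith) μ hinv
  let B : ℕ → Set (LatticeSpace n) := fun k =>
    (fun Λ => u (k + 1 : ℕ) • Λ) ⁻¹' {Λ | ∃ v ∈ latticeVecs n Λ, ∀ i,
      |v i| ≤ ((k + 1 : ℕ) : ℝ) ^ (-(1 / n + δ))}
  have hexp : 1 < (1 / n + δ) * (θ * n) := by
    have : (1 / n + δ) * (θ * n) = (1 + n * δ) / (1 + n * δ / 2) := by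
      rw [hθ]; field_simp
    rw [this, one_lt_div (by positivity)]
    linarith
  have hsum : ∑' k, μ (B k) ≠ ∞ := by
    have h1 : ∀ k, μ (B k) ≤
        C * ENNReal.ofReal (((k + 1 : ℕ) : ℝ) ^ (-((1 / n + δ) * (θ * n)))) := by
      intro k
      rw [hinv]
      refine (hmeas _ (by positivity)).trans (le_of_eq ?_)
      rw [← Real.rpow_mul (by positivity)]
      ring_nf
    refine ne_top_of_le_ne_top ?_ (ENNReal.tsum_le_tsum h1)
    rw [ENNReal.tsum_mul_left]
    refine ENNReal.mul_ne_top hC (Summable.tsum_ofReal_ne_top ?_)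
    exact (summable_nat_add_iff 1).2 (Real.summable_nat_rpow.2 (by linarith))
  filter_upwards [ae_eventually_notMem hsum] with Λ hΛ
  rw [← Filter.map_add_atTop_eq_nat 1, Filter.eventually_map]
  filter_upwards [hΛ] with k hk v hv
  by_contra! h
  exact hk ⟨v, hv, h⟩

theorem limsup_log_alpha1_le {n : ℕ} (hn : 0 < n) (u : ℝ → SLR n)
    (hu_hom : ∀ s t : ℝ, u (s + t) = u s * u t)
    (hu_cont : Continuous fun t => (u t : Matrix (Fin n) (Fin n) ℝ)) (Λ : LatticeSpace n)
    {δ : ℝ} (hδ : 0 < δ)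
    (h : ∀ᶠ k : ℕ in atTop, ∀ v ∈ latticeVecs n (u k • Λ), ∃ i, (k : ℝ) ^ (-(1 / n + δ)) < |v i|) :
    Filter.limsup (fun t : ℝ => Real.log (alpha1 n (u t • Λ)) / Real.log t) atTop ≤
      1 / n + 2 * δ := by
  have hnR : (0 : ℝ) < n := by exact_mod_cast hn
  obtain ⟨K, hK, hKu⟩ := exists_bound_of_continuous u hu_cont
  set M : ℝ := max (n * K) 1
  have hM1 : 1 ≤ M := le_max_right _ _
  refine limsup_le_of_eventually_le (by positivity) ?_
  filter_upwards [(tendsto_nat_floor_atTop (α := ℝ)).eventually h, eventually_ge_atTop (1 : ℝ),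
    (Real.tendsto_log_atTop.eventually_ge_atTop (Real.log M / δ)),
    Real.tendsto_log_atTop.eventually_gt_atTop 0] with t ht ht1 htM hlog
  set k : ℕ := ⌊t⌋₊
  have hkt : (k : ℝ) ≤ t := Nat.floor_le (by linarith)
  have hkt' : t < k + 1 := Nat.lt_floor_add_one t
  have hk1 : (1 : ℝ) ≤ k := by exact_mod_cast Nat.le_floor (by simpa using ht1)
  have hku : u k • Λ = u (k - t) • u t • Λ := by
    rw [smul_smul, ← hu_hom, sub_add_cancel]
  have hα : alpha1 n (u t • Λ) ≤ M * t ^ (1 / n + δ) := by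
    refine Real.sSup_le ?_ (by positivity)
    rintro _ ⟨g, hg, m, hm, rfl⟩
    have hv : vecOf n g m ∈ latticeVecs n (u t • Λ) := ⟨g, hg, m, hm, rfl⟩
    obtain ⟨i, hi⟩ := ht _ (by
      rw [hku]
      exact (mem_latticeVecs_smul n _ _ _).2 ⟨_, hv, rfl⟩)
    have hle := abs_mulVec_le _ (hKu (k - t) ⟨by linarith, by linarith⟩)
      (abs_le_eNorm (vecOf n g m)) i
    have hlt := hi.trans_le hle
    rw [Real.rpow_neg (by positivity)] at hlt
    have hkpos : (0 : ℝ) < (k : ℝ) ^ (1 / n + δ) := by positivity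
    have hpow : (k : ℝ) ^ (1 / n + δ) ≤ t ^ (1 / n + δ) :=
      Real.rpow_le_rpow (by positivity) hkt (by positivity)
    have hN : 0 < eNorm (vecOf n g m) := by
      have : 0 < n * (K * eNorm (vecOf n g m)) := (inv_pos.2 hkpos).trans hlt
      exact (pos_iff_pos_of_mul_pos (by rwa [← mul_assoc] at this)).1 (by positivity)
    rw [div_le_iff₀ hN]
    rw [inv_lt_iff_one_lt_mul₀ hkpos] at hlt
    calc (1 : ℝ) ≤ k ^ (1 / n + δ) * (n * (K * eNorm (vecOf n g m))) := by linarith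
      _ = (n * K) * k ^ (1 / n + δ) * eNorm (vecOf n g m) := by ring
      _ ≤ M * t ^ (1 / n + δ) * eNorm (vecOf n g m) := by
        gcongr
        exact le_max_left _ _
  have hα0 : 0 ≤ alpha1 n (u t • Λ) := by
    refine Real.sSup_nonneg ?_
    rintro _ ⟨g, -, m, -, rfl⟩
    exact div_nonneg zero_le_one (norm_nonneg _)
  rw [div_le_iff₀ hlog]
  rw [div_le_iff₀ hδ] at htM
  rcases hα0.eq_or_lt with h0 | hpos
  · rw [← h0, Real.log_zero]
    positivity
  · have := Real.log_le_log hpos hα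
    rw [Real.log_mul (by positivity) (by positivity), Real.log_rpow (by linarith)] at this
    linarith

/-- **Upper bound of the logarithm law.** For a one-parameter unipotent subgroup `{u_t}` of
`SL(n,ℝ)`, for almost every unimodular lattice `Λ`,
`limsup_{t→∞} log α₁(u_t Λ)/log t ≤ 1/n`. -/
theorem unipotent_logarithm_law_upper (n : ℕ) (hn : 2 ≤ n)
    (μ : Measure (LatticeSpace n)) [IsProbabilityMeasure μ]
    (hinv : ∀ (g : SLR n) (s : Set (LatticeSpace n)), μ ((fun x => g • x) ⁻¹' s) = μ s)
    (u : ℝ → SLR n) (hu_hom : ∀ s t : ℝ, u (s + t) = u s * u t)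
    (hu_cont : Continuous fun t => (u t : Matrix (Fin n) (Fin n) ℝ))
    (hu_unip : ∀ t, IsNilpotent ((u t : Matrix (Fin n) (Fin n) ℝ) - 1)) :
    ∀ᵐ Λ ∂μ, Filter.limsup
        (fun t : ℝ => Real.log (alpha1 n (u t • Λ)) / Real.log t) atTop ≤ 1 / (n : ℝ) := by
  have hn0 : 0 < n := by omega
  have hall : ∀ᵐ Λ ∂μ, ∀ m : ℕ, ∀ᶠ k : ℕ in atTop, ∀ v ∈ latticeVecs n (u k • Λ),
      ∃ i, (k : ℝ) ^ (-(1 / n + 1 / ((m : ℝ) + 1))) < |v i| :=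
    ae_all_iff.2 fun m => ae_eventually_no_short_vector n hn0 μ hinv u _ Nat.one_div_pos_of_nat
  filter_upwards [hall] with Λ hΛ
  refine le_of_forall_pos_le_add fun ε hε => ?_
  obtain ⟨m, hm⟩ := exists_nat_one_div_lt (half_pos hε)
  have := limsup_log_alpha1_le hn0 u hu_hom hu_cont Λ Nat.one_div_pos_of_nat (hΛ m)
  linarith
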